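/- Let k be a PAC field whose characteristic does not divide n(n-1), where n ≥ 2 is an integer (equivalently, n(n-1) is invertible in k). Then every field extension E/k of degree n (automatically separable) can be realized by a trinomial of the form Y^n - Y^{n-1} - b: there exists b ∈ k such that Y^n - Y^{n-1} - b is irreducible in k[Y] and E is generated over k by one of its roots. -/

import Mathlib

/-!
Put `n = m + 2`. Over an algebraically closed field `F` in which `n` and `n - 1` are nonzero, the
generic trinomial `Y ^ n - Y ^ (n - 1) - t` over `F(t)` has Galois group the full symmetric group
(`trinomial_perm_surjective`). It is doubly transitive, because `t` is a polynomial in a root `y` and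
the cofactor of `Y - y` is Eisenstein at `y = 1`; and the simple critical point `(n - 1) / n`, the
only one with nonzero critical value, makes inertia contribute a transposition.

Let `L` be a separable closure of `k`; the degree of `E / k` is prime to the characteristic, so
`E / k` is separable and has `n` embeddings `σ` into `L`. For `d` in `E`, the resolvent
`f(s, b) = ∏ π, (s - ∑ σ, σ(d) * y (π σ))`, where `y` enumerates by the embeddings the roots of
`Y ^ n - Y ^ (n - 1) - b` and `π` runs over all permutations, has coefficients in `k`
(`exists_resolvent_polynomial`). It is the twist of the Galois closure of the cover `y ↦ b` by the
action of the absolute Galois group on the embeddings of `E`. For a suitable `d` it is absolutely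
irreducible, because the geometric Galois group permutes its roots transitively
(`exists_irreducible_resolvent`).

As `k` is PAC, `f` has infinitely many zeros over `k`, hence one at which `f(·, b)` is separable.
There the Galois group permutes the roots of the trinomial in the same way as the embeddings of `E`,
so that these roots are the conjugates of a generator of `E`
(`exists_generator_of_resolvent_zero`). By degrees, the trinomial is its minimal polynomial.
-/

open Polynomial

/-- A field `k` is PAC (pseudo algebraically closed): every polynomial in two
variables over `k` that remains irreducible over an algebraic closure of `k`
has infinitely many zeros in `k × k`. -/
def IsPAC (k : Type*) [Field k] : Prop :=
  ∀ f : MvPolynomial (Fin 2) k,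
    Irreducible (MvPolynomial.map (algebraMap k (AlgebraicClosure k)) f) →
    {x : k × k | MvPolynomial.eval ![x.1, x.2] f = 0}.Infinite

/-! ### The polynomial `Y ^ (m + 2) - Y ^ (m + 1) - c`: critical values and irreducibility -/

section Trinomial

variable {F : Type*} [Field F]

/-- The nonzero critical value of `Y ^ (m + 2) - Y ^ (m + 1)`, attained at `(m + 1) / (m + 2)`: the
fibre above it has one double point and all its other points are simple, so it has at least `m + 1`
distinct points. -/
theorem exists_critical_value [IsAlgClosed F] (m : ℕ) (h1 : ((m + 1 : ℕ) : F) ≠ 0)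
    (h2 : ((m + 2 : ℕ) : F) ≠ 0) :
    ∃ y₀ c : F, (X - C y₀) ^ 2 ∣ (X ^ (m + 2) - X ^ (m + 1) - C c : F[X]) ∧
      m + 1 ≤ ((X ^ (m + 2) - X ^ (m + 1) - C c : F[X]).rootSet F).ncard := by
  classical
  obtain ⟨y, hy⟩ : ∃ y : F, y = ((m + 1 : ℕ) : F) / ((m + 2 : ℕ) : F) := ⟨_, rfl⟩
  have hy0 : y ≠ 0 := by rw [hy]; exact div_ne_zero h1 h2
  have hyy : ((m + 2 : ℕ) : F) * y = ((m + 1 : ℕ) : F) := by rw [hy]; field_simp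
  obtain ⟨c, hc⟩ : ∃ c : F, c = y ^ (m + 2) - y ^ (m + 1) := ⟨_, rfl⟩
  have hc0 : c ≠ 0 := by
    have hy1 : y - 1 ≠ 0 := by
      intro h
      have : y = 1 := sub_eq_zero.mp h
      rw [this] at hyy
      push_cast at hyy
      have : (1 : F) = 0 := by linear_combination hyy
      exact one_ne_zero this
    rw [hc, show y ^ (m + 2) - y ^ (m + 1) = y ^ (m + 1) * (y - 1) by ring]
    exact mul_ne_zero (pow_ne_zero _ hy0) hy1
  set p : F[X] := X ^ (m + 2) - X ^ (m + 1) - C c with hp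
  have hdeg : p.natDegree = m + 2 := by rw [hp]; compute_degree!
  have hp0 : p ≠ 0 := by intro h; rw [h] at hdeg; simp at hdeg
  have hder : derivative p = C ((m + 2 : ℕ) : F) * X ^ m * (X - C y) := by
    have : C (((m + 2 : ℕ) : F)) * C y = C (((m + 1 : ℕ) : F)) := by rw [← C_mul, hyy]
    simp only [hp, derivative_sub, derivative_X_pow, derivative_C]
    rw [show m + 2 - 1 = m + 1 by rfl, show m + 1 - 1 = m by rfl]
    linear_combination X ^ m * this
  have hroot : p.IsRoot y := by simp [hp, hc]
  have hroot' : (derivative p).IsRoot y := by simp [hder]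
  have hm2 : 1 < p.rootMultiplicity y :=
    (one_lt_rootMultiplicity_iff_isRoot hp0).2 ⟨hroot, hroot'⟩
  have hm3 : p.rootMultiplicity y ≤ 2 := by
    by_contra! h
    have h3 : (X - C y) ^ 3 ∣ p := (le_rootMultiplicity_iff hp0).1 h
    have h4 := pow_sub_one_dvd_derivative_of_pow_dvd h3
    rw [hder, show 3 - 1 = 1 + 1 by rfl, pow_succ, pow_one] at h4
    have h5 := (mul_dvd_mul_iff_right (X_sub_C_ne_zero y)).1 h4
    rw [dvd_iff_isRoot] at h5
    simp only [IsRoot.def, eval_mul, eval_C, eval_pow, eval_X] at h5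
    exact mul_ne_zero h2 (pow_ne_zero _ hy0) h5
  refine ⟨y, c, (le_rootMultiplicity_iff hp0).1 hm2, ?_⟩
  have hnd : (p.roots.erase y).Nodup := by
    rw [Multiset.nodup_iff_count_le_one]
    intro a
    by_cases ha : a = y
    · subst ha
      rw [Multiset.count_erase_self, count_roots]
      omega
    · rw [Multiset.count_erase_of_ne ha, count_roots]
      by_contra! h
      have := (one_lt_rootMultiplicity_iff_isRoot hp0).1 h
      have h5 := this.2
      simp only [hder, IsRoot.def, eval_mul, eval_C, eval_pow, eval_X, eval_sub] at h5
      have h6 : a ^ m = 0 := by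
        rcases mul_eq_zero.1 h5 with h | h
        · rcases mul_eq_zero.1 h with h | h
          · exact absurd h h2
          · exact h
        · exact absurd (sub_eq_zero.1 h) ha
      have h7 := this.1
      simp only [hp, IsRoot.def, eval_sub, eval_C, eval_pow, eval_X] at h7
      apply hc0
      linear_combination (-1 : F) * h7 + (a ^ 2 - a) * h6
  have hcard : (p.roots.erase y).card = m + 1 := by
    rw [Multiset.card_erase_of_mem ((mem_roots hp0).2 hroot),
      ← (IsAlgClosed.splits p).natDegree_eq_card_roots, hdeg]
    rfl
  refine (hcard.symm.trans ((Multiset.toFinset_card_of_nodup hnd).symm.trans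
    (Set.ncard_coe_finset _).symm)).le.trans (Set.ncard_le_ncard ?_ (rootSet_finite _ _))
  intro a ha
  have ha' : a ∈ p.roots := Multiset.mem_of_mem_erase (by simpa using ha)
  rw [mem_rootSet]
  exact ⟨hp0, by rw [coe_aeval_eq_eval]; exact (mem_roots'.1 ha').2⟩

/-- The generic trinomial is linear in the parameter, hence irreducible. -/
theorem trinomial_irreducible (m : ℕ) :
    Irreducible (X ^ (m + 2) - X ^ (m + 1) - C X : F[X][X]) := by
  rw [← MulEquiv.irreducible_iff (Bivariate.swap (R := F))]
  have : Bivariate.swap (X ^ (m + 2) - X ^ (m + 1) - C X : F[X][X]) =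
      -(X - C (X ^ (m + 2) - X ^ (m + 1))) := by
    simp only [map_sub, map_pow, Bivariate.swap_X, Bivariate.swap_Y]
    ring
  rw [this]
  exact (Associated.neg_right (Associated.refl _)).irreducible (irreducible_X_sub_C _)

/-- With `t = y ^ (m + 2) - y ^ (m + 1)`, the cofactor of `Y - y` in the generic trinomial is
irreducible over `F[y]`: it is Eisenstein at `y - 1`, since at `y = 1` it becomes `Y ^ (m + 1)`, and
its constant term is `y ^ m * (y - 1)`. -/
theorem exists_eisenstein_factor (m : ℕ) :
    ∃ φ : F[X][X], φ.Monic ∧ Irreducible φ ∧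
      (X - C X) * φ = X ^ (m + 2) - X ^ (m + 1) - C (X ^ (m + 2) - X ^ (m + 1)) := by
  set q : F[X][X] := X ^ (m + 2) - X ^ (m + 1) - C (X ^ (m + 2) - X ^ (m + 1)) with hq
  have hqm : q.Monic := by
    rw [hq, sub_sub]
    apply monic_X_pow_sub
    refine (degree_add_le _ _).trans_lt (max_lt ?_ ?_)
    · rw [degree_X_pow]; exact_mod_cast Nat.lt_succ_self _
    · exact degree_C_le.trans_lt (by exact_mod_cast Nat.succ_pos _)
  have hqd : q.natDegree = m + 2 := by rw [hq]; compute_degree!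
  obtain ⟨φ, hφ⟩ : (X - C X) ∣ q := by
    rw [dvd_iff_isRoot]; simp [hq]
  have hφm : φ.Monic := by
    rw [hφ] at hqm
    exact (monic_X_sub_C _).of_mul_monic_left hqm
  have hφd : φ.natDegree = m + 1 := by
    have := congrArg natDegree hφ
    rw [(monic_X_sub_C (X : F[X])).natDegree_mul hφm, hqd, natDegree_X_sub_C] at this
    omega
  refine ⟨φ, hφm, ?_, hφ.symm⟩
  have hprime : (Ideal.span {(X - C 1 : F[X])}).IsPrime :=
    (Ideal.span_singleton_prime (X_sub_C_ne_zero _)).2 (prime_X_sub_C _)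
  have hmap : φ.map (evalRingHom (1 : F)) = X ^ (m + 1) := by
    have h := congrArg (Polynomial.map (evalRingHom (1 : F))) hφ
    simp only [hq, Polynomial.map_sub, Polynomial.map_pow, Polynomial.map_mul, map_X, map_C,
      coe_evalRingHom, eval_sub, eval_pow, eval_X, one_pow, sub_self, map_zero, sub_zero] at h
    apply mul_left_cancel₀ (X_sub_C_ne_zero (1 : F))
    rw [← h, C_1]
    ring
  have hc0 : φ.coeff 0 = X ^ m * (X - C 1) := by
    have h := congrArg (eval (0 : F[X])) hφ
    simp only [hq, eval_sub, eval_mul, eval_pow, eval_X, eval_C, ← coeff_zero_eq_eval_zero] at h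
    apply mul_left_cancel₀ (X_ne_zero (R := F))
    rw [C_1]
    simp at h
    linear_combination h
  refine IsEisensteinAt.irreducible (𝓟 := Ideal.span {(X - C 1 : F[X])})
    ⟨?_, ?_, ?_⟩ hprime hφm.isPrimitive (by omega)
  · rw [hφm.leadingCoeff]
    exact fun h => hprime.ne_top ((Ideal.eq_top_iff_one _).2 h)
  · intro i hi
    rw [Ideal.mem_span_singleton, dvd_iff_isRoot]
    have := congrArg (fun p => p.coeff i) hmap
    simpa [coeff_X_pow, show i ≠ m + 1 by omega] using this
  · rw [hc0, Ideal.span_singleton_pow, Ideal.mem_span_singleton, pow_two]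
    intro h
    have h5 := (mul_dvd_mul_iff_right (X_sub_C_ne_zero (1 : F))).1 h
    rw [dvd_iff_isRoot] at h5
    simp at h5

end Trinomial

/-! ### The Galois group of `Y ^ (m + 2) - Y ^ (m + 1) - t` over `F(t)` is the full symmetric group -/

section Galois

variable {F K N : Type*} [Field F] [Field K] [Field N]
  [Algebra F[X] K] [IsFractionRing F[X] K] [Algebra K N] [Algebra F[X] N] [IsScalarTower F[X] K N]

theorem aeval_trinomial_iff (m : ℕ) (y : N) :
    aeval y (X ^ (m + 2) - X ^ (m + 1) - C X : F[X][X]) = 0 ↔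
      y ^ (m + 2) - y ^ (m + 1) = algebraMap F[X] N X := by
  simp [sub_eq_zero]

theorem monic_trinomial (m : ℕ) {R : Type*} [CommRing R] [Nontrivial R] (b : R) :
    (X ^ (m + 2) - X ^ (m + 1) - C b : R[X]).Monic := by
  rw [sub_sub]
  apply monic_X_pow_sub
  refine (degree_add_le _ _).trans_lt (max_lt ?_ ?_)
  · rw [degree_X_pow]; exact_mod_cast Nat.lt_succ_self _
  · exact degree_C_le.trans_lt (by exact_mod_cast Nat.succ_pos _)

theorem trinomial_root_conj (m : ℕ) [Normal K N] (y z : N)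
    (hy : y ^ (m + 2) - y ^ (m + 1) = algebraMap F[X] N X)
    (hz : z ^ (m + 2) - z ^ (m + 1) = algebraMap F[X] N X) :
    ∃ g : N ≃ₐ[K] N, g y = z := by
  rw [← isConjRoot_iff_exists_algEquiv]
  have hirr := ((monic_trinomial m (X : F[X])).irreducible_iff_irreducible_map_fraction_map
    (K := K)).1 (trinomial_irreducible m)
  have hm := (monic_trinomial m (X : F[X])).map (algebraMap F[X] K)
  have key : ∀ w : N, w ^ (m + 2) - w ^ (m + 1) = algebraMap F[X] N X →
      minpoly K w = (X ^ (m + 2) - X ^ (m + 1) - C X : F[X][X]).map (algebraMap F[X] K) := by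
    intro w hw
    refine (minpoly.eq_of_irreducible_of_monic hirr ?_ hm).symm
    rw [aeval_map_algebraMap, aeval_trinomial_iff]
    exact hw
  rw [isConjRoot_def, key y hy, key z hz]

/-- A root of the generic trinomial is transcendental over `F`, because `t` is a polynomial in it. -/
theorem transcendental_root (m : ℕ) (hinj : Function.Injective (algebraMap F[X] N)) (y : N)
    (hy : y ^ (m + 2) - y ^ (m + 1) = algebraMap F[X] N X) :
    Function.Injective (eval₂RingHom ((algebraMap F[X] N).comp C) y) := by
  let : Algebra F N := ((algebraMap F[X] N).comp C).toAlgebra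
  have ht : Transcendental F (algebraMap F[X] N X) := by
    rw [transcendental_iff]
    intro p hp
    apply hinj
    rw [map_zero, ← hp, aeval_def]
    conv_lhs => rw [← p.eval₂_C_X, hom_eval₂]
    rfl
  have hyt : Transcendental F y := by
    intro h
    apply ht
    rw [← hy]
    exact (h.pow _).sub (h.pow _)
  have := transcendental_iff_injective.1 hyt
  exact this

/-- The stabilizer of a root `y` is transitive on the other roots. Indeed `K(y)` is the rational
function field `F(y)`, over which `exists_eisenstein_factor` gives the common minimal polynomial of
the other roots. -/
theorem trinomial_stabilizer_conj (m : ℕ) [Normal K N] (y z w : N)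
    (hy : y ^ (m + 2) - y ^ (m + 1) = algebraMap F[X] N X)
    (hz : z ^ (m + 2) - z ^ (m + 1) = algebraMap F[X] N X)
    (hw : w ^ (m + 2) - w ^ (m + 1) = algebraMap F[X] N X) (hzy : z ≠ y) (hwy : w ≠ y) :
    ∃ g : N ≃ₐ[K] N, g y = y ∧ g z = w := by
  let L := IntermediateField.adjoin K {y}
  let ev : F[X] →+* N := eval₂RingHom ((algebraMap F[X] N).comp C) y
  have hinj : Function.Injective (algebraMap F[X] N) := by
    rw [IsScalarTower.algebraMap_eq F[X] K N]
    exact (algebraMap K N).injective.comp (IsFractionRing.injective F[X] K)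
  have hev : Function.Injective ev := transcendental_root m hinj y hy
  let y' : L := ⟨y, IntermediateField.mem_adjoin_simple_self K y⟩
  let evL : F[X] →+* L := eval₂RingHom (((algebraMap K L).comp (algebraMap F[X] K)).comp C) y'
  have hevL : ∀ p, ((evL p : L) : N) = ev p := by
    intro p
    have : (algebraMap L N).comp evL = ev := by
      ext a
      · simp only [evL, ev, RingHom.comp_apply, coe_eval₂RingHom, eval₂_C]
        exact (IsScalarTower.algebraMap_apply F[X] K N (C a)).symm
      · simp [evL, ev, y']
    exact congrArg (fun f => f p) this
  let : Algebra F[X] L := evL.toAlgebra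
  have hfaith : FaithfulSMul F[X] L := by
    rw [faithfulSMul_iff_algebraMap_injective]
    intro a b hab
    apply hev
    rw [← hevL, ← hevL]
    exact congrArg _ hab
  have hfrac : IsFractionRing F[X] L := by
    apply IsFractionRing.of_field
    -- `M` is the fraction field of `F[y]` inside `N`; it contains `K` because it contains `t`
    let M : Subfield N := (IsFractionRing.lift (K := FractionRing F[X]) hev).fieldRange
    have hM : ∀ p, ev p ∈ M := fun p => ⟨algebraMap _ _ p, by simp⟩
    have hX : algebraMap F[X] N X ∈ M := by
      rw [← hy]
      have : y = ev X := by simp [ev]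
      rw [this]
      exact M.sub_mem (M.pow_mem (hM _) _) (M.pow_mem (hM _) _)
    have hFX : ∀ p : F[X], algebraMap F[X] N p ∈ M := by
      intro p
      induction p using Polynomial.induction_on' with
      | add p q hp hq => rw [map_add]; exact M.add_mem hp hq
      | monomial n a =>
        rw [← C_mul_X_pow_eq_monomial, map_mul, map_pow]
        refine M.mul_mem ?_ (M.pow_mem hX _)
        have : algebraMap F[X] N (C a) = ev (C a) := by simp [ev]
        rw [this]
        exact hM _
    have hK : ∀ x : K, algebraMap K N x ∈ M := by
      intro x
      obtain ⟨a, b, -, rfl⟩ := IsFractionRing.div_surjective (A := F[X]) x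
      rw [map_div₀, ← IsScalarTower.algebraMap_apply, ← IsScalarTower.algebraMap_apply]
      exact M.div_mem (hFX a) (hFX b)
    let M' : IntermediateField K N := M.toIntermediateField hK
    have hLM : L ≤ M' := by
      rw [IntermediateField.adjoin_simple_le_iff]
      change y ∈ M
      have : y = ev X := by simp [ev]
      rw [this]
      exact hM _
    intro x
    obtain ⟨u, hu⟩ : (x : N) ∈ M := hLM x.2
    obtain ⟨a, b, -, rfl⟩ := IsFractionRing.div_surjective (A := F[X]) u
    refine ⟨a, b, ?_⟩
    apply Subtype.ext
    have : ((algebraMap F[X] L a / algebraMap F[X] L b : L) : N) = ev a / ev b := by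
      rw [← hevL, ← hevL]; rfl
    rw [this, ← hu]
    simp
  obtain ⟨φ, hφm, hφi, hφ⟩ := exists_eisenstein_factor (F := F) m
  have hirr := (hφm.irreducible_iff_irreducible_map_fraction_map (K := L)).1 hφi
  have key : ∀ v : N, v ≠ y → v ^ (m + 2) - v ^ (m + 1) = algebraMap F[X] N X →
      minpoly L v = φ.map (algebraMap F[X] L) := by
    intro v hvy hv
    refine (minpoly.eq_of_irreducible_of_monic hirr ?_ (hφm.map _)).symm
    have h := congrArg (fun p => aeval v (p.map (algebraMap F[X] L))) hφ
    simp only [Polynomial.map_sub, Polynomial.map_mul, Polynomial.map_pow, map_X, map_C, map_sub,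
      map_mul, map_pow, aeval_X, aeval_C] at h
    have hXy : algebraMap L N (algebraMap F[X] L X) = y := by
      change ((evL X : L) : N) = y
      rw [hevL]
      simp [ev]
    rw [hXy, hy, hv, sub_self] at h
    exact (mul_eq_zero.1 h).resolve_left (sub_ne_zero.2 hvy)
  have hconj : IsConjRoot L w z := by
    rw [isConjRoot_def, key z hzy hz, key w hwy hw]
  obtain ⟨g, hg⟩ := isConjRoot_iff_exists_algEquiv.1 hconj
  exact ⟨g.restrictScalars K, g.commutes y', hg⟩

/-- The residue field of `F[X]` at `X - c` is `F` itself, hence algebraically closed. -/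
theorem perfectField_residueField [IsAlgClosed F] (c : F)
    [(Ideal.span {(X - C c : F[X])}).IsMaximal] :
    PerfectField (Ideal.span {(X - C c : F[X])}).ResidueField := by
  set p := Ideal.span {(X - C c : F[X])}
  let f : F →+* p.ResidueField :=
    ((algebraMap (F[X] ⧸ p) p.ResidueField).comp (Ideal.Quotient.mk p)).comp C
  have hf : Function.Surjective f := by
    intro x
    obtain ⟨x, rfl⟩ := (Ideal.bijective_algebraMap_quotient_residueField p).2 x
    obtain ⟨x, rfl⟩ := Ideal.Quotient.mk_surjective x
    refine ⟨x.eval c, ?_⟩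
    change algebraMap (F[X] ⧸ p) p.ResidueField (Ideal.Quotient.mk p (C (x.eval c))) = _
    congr 1
    rw [Ideal.Quotient.eq, Ideal.mem_span_singleton, dvd_iff_isRoot]
    simp
  have : IsAlgClosed p.ResidueField :=
    IsAlgClosed.of_ringEquiv F _ (RingEquiv.ofBijective f ⟨f.injective, hf⟩)
  infer_instance

theorem trinomial_map_separable (m : ℕ) (h2 : ((m + 2 : ℕ) : F) ≠ 0) :
    ((X ^ (m + 2) - X ^ (m + 1) - C X : F[X][X]).map (algebraMap F[X] K)).Separable := by
  have hirr := ((monic_trinomial m (X : F[X])).irreducible_iff_irreducible_map_fraction_map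
    (K := K)).1 (trinomial_irreducible m)
  rw [separable_iff_derivative_ne_zero hirr, derivative_map, Ne,
    Polynomial.map_eq_zero_iff (IsFractionRing.injective F[X] K)]
  intro h
  have h' := congrArg (fun p => p.coeff (m + 1)) h
  simp only [derivative_sub, derivative_X_pow, derivative_C, coeff_sub, coeff_C_mul, coeff_X_pow,
    coeff_zero] at h'
  simp at h'
  apply h2
  rw [← C_inj, C_0, ← h']
  simp only [map_natCast, Nat.cast_add, Nat.cast_ofNat, map_add, map_ofNat]

/-- Every permutation of the roots `y` of the generic trinomial is induced by the Galois group of `N`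
over `K = F(t)`; `S` is the integral closure of `F[t]` in `N`, and `hN` says that `N` is generated by
the roots. The action on the roots is doubly transitive, hence primitive. A prime of `S` above the
nonzero critical value is ramified, so has a nontrivial inertia element; as at most two roots become
congruent modulo this prime, that element is a transposition. A primitive group containing a
transposition is the full symmetric group. -/
theorem trinomial_perm_surjective_aux [IsAlgClosed F] (m : ℕ) (h1 : ((m + 1 : ℕ) : F) ≠ 0)
    (h2 : ((m + 2 : ℕ) : F) ≠ 0) [IsGalois K N] [FiniteDimensional K N]
    (S : Type*) [CommRing S] [IsDomain S] [Algebra F[X] S] [Algebra S N] [IsScalarTower F[X] S N]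
    [IsIntegralClosure S F[X] N]
    (hN : ∀ g : Gal(N/K), (∀ y : N, y ^ (m + 2) - y ^ (m + 1) = algebraMap F[X] N X → g y = y) →
      g = 1)
    {ι : Type*} [Fintype ι] (y : ι → N) (hy : Function.Injective y)
    (hyr : (X ^ (m + 2) - X ^ (m + 1) - C X : F[X][X]).map (algebraMap F[X] N) =
      ∏ i, (X - C (y i)))
    (π : Equiv.Perm ι) : ∃ g : N ≃ₐ[K] N, ∀ i, g (y i) = y (π i) := by
  classical
  have hTm := monic_trinomial m (X : F[X])
  obtain ⟨T, hT⟩ : ∃ T : F[X][X], T = X ^ (m + 2) - X ^ (m + 1) - C X := ⟨_, rfl⟩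
  rw [← hT] at hTm hyr
  have hTd : T.natDegree = m + 2 := by rw [hT]; compute_degree!
  have hded := IsIntegralClosure.isDedekindDomain F[X] K N S
  have hfin : Module.Finite F[X] S := IsIntegralClosure.finite F[X] K N S
  have hfr : IsFractionRing S N := IsIntegralClosure.isFractionRing_of_finite_extension F[X] K N S
  let : MulSemiringAction Gal(N/K) S := IsIntegralClosure.MulSemiringAction F[X] K N S
  -- the Galois group acts on `S`, and `S / F[t]` is Galois with this group
  have hgg : IsGaloisGroup Gal(N/K) F[X] S := IsGaloisGroup.of_isFractionRing _ _ _ K N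
  have hcoe : ∀ (g : Gal(N/K)) (s : S), algebraMap S N (g • s) = g (algebraMap S N s) :=
    fun g s => algebraMap_galRestrictHom_apply F[X] K N S g s
  have hSN : Function.Injective (algebraMap S N) := IsFractionRing.injective S N
  have hinj : Function.Injective (algebraMap F[X] N) := by
    rw [IsScalarTower.algebraMap_eq F[X] K N]
    exact (algebraMap K N).injective.comp (IsFractionRing.injective F[X] K)
  have hfaith : FaithfulSMul F[X] S := by
    rw [faithfulSMul_iff_algebraMap_injective]
    intro a b hab
    apply hinj
    rw [IsScalarTower.algebraMap_apply F[X] S N, IsScalarTower.algebraMap_apply F[X] S N, hab]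
  have hroot : ∀ s : S, s ∈ T.rootSet S ↔
      (algebraMap S N s) ^ (m + 2) - (algebraMap S N s) ^ (m + 1) = algebraMap F[X] N X := by
    intro s
    rw [hTm.mem_rootSet, ← aeval_trinomial_iff, ← hT, aeval_algebraMap_apply,
      map_eq_zero_iff _ hSN]
  have hyroot : ∀ i, y i ^ (m + 2) - y i ^ (m + 1) = algebraMap F[X] N X := by
    intro i
    rw [← aeval_trinomial_iff, ← hT, aeval_def, ← eval_map, hyr, eval_prod]
    exact Finset.prod_eq_zero (Finset.mem_univ i) (by simp)
  have hrooty : ∀ w : N, w ^ (m + 2) - w ^ (m + 1) = algebraMap F[X] N X → ∃ i, y i = w := by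
    intro w hw
    rw [← aeval_trinomial_iff, ← hT, aeval_def, ← eval_map, hyr, eval_prod,
      Finset.prod_eq_zero_iff] at hw
    obtain ⟨i, -, hi⟩ := hw
    exact ⟨i, by simpa [sub_eq_zero, eq_comm] using hi⟩
  have hlift : ∀ i, ∃ s : S, algebraMap S N s = y i := by
    intro i
    apply IsIntegralClosure.isIntegral_iff (A := S) (R := F[X]).1
    refine ⟨T, hTm, ?_⟩
    rw [← aeval_def, hT, aeval_trinomial_iff]
    exact hyroot i
  choose s hs using hlift
  have hTS : T.map (algebraMap F[X] S) = ∏ i, (X - C (s i)) := by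
    apply Polynomial.map_injective _ hSN
    rw [Polynomial.map_map, ← IsScalarTower.algebraMap_eq, hyr, Polynomial.map_prod]
    simp [hs]
  have hsplit : (T.map (algebraMap F[X] S)).Splits := by
    rw [hTS]
    exact Splits.prod fun i _ => Splits.X_sub_C _
  have hcard : Fintype.card ι = m + 2 := by
    have := congrArg natDegree hyr
    rw [hTm.natDegree_map, hTd, natDegree_finsetProd_X_sub_C_eq_card] at this
    simpa using this.symm
  have hsmem : ∀ i, s i ∈ T.rootSet S := fun i => by rw [hroot, hs]; exact hyroot i
  let e : ι ≃ T.rootSet S := Equiv.ofBijective (fun i => ⟨s i, hsmem i⟩) (by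
    constructor
    · intro i j hij
      apply hy
      rw [← hs, ← hs]
      exact congrArg (algebraMap S N) (Subtype.ext_iff.1 hij)
    · rintro ⟨t, ht⟩
      obtain ⟨i, hi⟩ := hrooty _ ((hroot t).1 ht)
      exact ⟨i, Subtype.ext (hSN (by rw [hs, hi]))⟩)
  have hncard : (T.rootSet S).ncard = m + 2 := by
    rw [← Nat.card_coe_set_eq, ← Nat.card_congr e, Nat.card_eq_fintype_card, hcard]
  have h2t : MulAction.IsMultiplyPretransitive Gal(N/K) (T.rootSet S) 2 := by
    rw [MulAction.is_two_pretransitive_iff]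
    rintro ⟨a, ha⟩ ⟨b, hb⟩ ⟨c, hc⟩ ⟨d, hd⟩ hab hcd
    have hab' : a ≠ b := fun h => hab (Subtype.ext h)
    have hcd' : c ≠ d := fun h => hcd (Subtype.ext h)
    rw [hroot] at ha hb hc hd
    obtain ⟨g, hg⟩ := trinomial_root_conj (K := K) m _ _ ha hc
    obtain ⟨g', hg', hg''⟩ := trinomial_stabilizer_conj (K := K) m _ (g (algebraMap S N b)) _ hc
      (by rw [← map_pow g, ← map_pow g, ← map_sub g, hb, IsScalarTower.algebraMap_apply F[X] K N,
        g.commutes]) hd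
      (by rw [← hg]; exact fun h => hab' (hSN (g.injective h)).symm)
      (fun h => hcd' (hSN h).symm)
    refine ⟨g' * g, Subtype.ext (hSN ?_), Subtype.ext (hSN ?_)⟩
    · rw [rootSet.coe_smul, hcoe, AlgEquiv.mul_apply, hg, hg']
    · rw [rootSet.coe_smul, hcoe, AlgEquiv.mul_apply, hg'']
  have hprim := MulAction.isPreprimitive_of_is_two_pretransitive h2t
  -- an inertia element above the critical value acts as a transposition
  have hswap : ∃ g : Gal(N/K), (MulAction.toPermHom Gal(N/K) (T.rootSet S) g).IsSwap := by
    obtain ⟨y₀, c, hdvd, hnc⟩ := exists_critical_value m h1 h2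
    let p : Ideal F[X] := Ideal.span {X - C c}
    have hpmax : p.IsMaximal :=
      PrincipalIdealRing.isMaximal_of_irreducible (irreducible_X_sub_C c)
    have hp0 : p ≠ ⊥ := by
      rw [Ne, Ideal.span_singleton_eq_bot]
      exact X_sub_C_ne_zero c
    have hperf : PerfectField p.ResidueField := perfectField_residueField c
    have htf : Module.IsTorsionFree F[X] S := inferInstance
    have hflat : Module.Flat F[X] S := inferInstance
    obtain ⟨P, hPmax, hPp⟩ := Ideal.exists_maximal_ideal_liesOver_of_isIntegral (S := S) p
    have hmemP : algebraMap F[X] S (X - C c) ∈ P := by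
      have : X - C c ∈ P.under F[X] := by
        rw [← Ideal.LiesOver.over (p := p) (P := P)]
        exact Ideal.mem_span_singleton_self _
      exact this
    have hevalS : ∀ w : F, ∀ s' : S, (X - C w) ^ 2 ∣ (X ^ (m + 2) - X ^ (m + 1) - C c : F[X]) →
        s' ∈ T.rootSet S → (s' - algebraMap F[X] S (C w)) ^ 2 ∣ algebraMap F[X] S (X - C c) := by
      intro w s' hw hs'
      rw [hTm.mem_rootSet] at hs'
      have h := map_dvd (eval₂RingHom ((algebraMap F[X] S).comp C) s') hw
      have e1 : eval₂RingHom ((algebraMap F[X] S).comp C) s' ((X - C w) ^ 2) =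
          (s' - algebraMap F[X] S (C w)) ^ 2 := by
        rw [map_pow, map_sub]
        simp
      have e2 : eval₂RingHom ((algebraMap F[X] S).comp C) s'
          (X ^ (m + 2) - X ^ (m + 1) - C c) = algebraMap F[X] S (X - C c) := by
        simp only [hT, map_sub, map_pow, aeval_X, aeval_C] at hs'
        simp only [coe_eval₂RingHom, eval₂_pow, eval₂_X, eval₂_C, RingHom.comp_apply,
          map_sub]
        linear_combination hs'
      rwa [e1, e2] at h
    -- some root is congruent to the critical point modulo `P`
    obtain ⟨i, hi⟩ : ∃ i, algebraMap F[X] S (C y₀) - s i ∈ P := by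
      have h := congrArg (eval (algebraMap F[X] S (C y₀))) hTS
      have h0 : y₀ ^ (m + 2) - y₀ ^ (m + 1) = c := by
        have : (X - C y₀) ∣ (X ^ (m + 2) - X ^ (m + 1) - C c : F[X]) :=
          (dvd_pow_self _ two_ne_zero).trans hdvd
        rw [dvd_iff_isRoot] at this
        simpa [sub_eq_zero] using this
      have h1 : eval (algebraMap F[X] S (C y₀)) (T.map (algebraMap F[X] S)) ∈ P := by
        have : eval (algebraMap F[X] S (C y₀)) (T.map (algebraMap F[X] S)) =
            - algebraMap F[X] S (X - C c) := by
          rw [← h0]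
          simp only [hT, Polynomial.map_sub, Polynomial.map_pow, map_X, map_C, eval_sub, eval_pow,
            eval_X, eval_C, map_sub, map_pow]
          ring
        rw [this]
        exact P.neg_mem hmemP
      rw [h, eval_prod] at h1
      obtain ⟨i, -, hi⟩ := (Ideal.IsPrime.prod_mem_iff (hp := hPmax.isPrime)).1 h1
      exact ⟨i, by simpa using hi⟩
    have hram : p.map (algebraMap F[X] S) ≤ P ^ 2 := by
      rw [Ideal.map_span, Set.image_singleton, Ideal.span_singleton_le_iff_mem]
      refine Ideal.mem_of_dvd _ (hevalS y₀ (s i) hdvd (hsmem i)) (Ideal.pow_mem_pow ?_ 2)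
      rw [← neg_sub]
      exact P.neg_mem hi
    have hcardI : Nat.card (P.inertia Gal(N/K)) ≠ 1 := by
      rw [Ideal.card_inertia_eq_ramificationIdxIn p P,
        Ideal.ramificationIdxIn_eq_ramificationIdx p P Gal(N/K),
        ← Ideal.ramificationIdx'_eq_ramificationIdx p P hp0]
      exact (Ideal.ramificationIdx'_ne_one_iff (hram.trans (Ideal.pow_le_self two_ne_zero))).2 hram
    obtain ⟨g, hgI, hg1⟩ : ∃ g ∈ P.inertia Gal(N/K), g ≠ 1 := by
      rw [Ne, Subgroup.card_eq_one, Subgroup.eq_bot_iff_forall] at hcardI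
      push Not at hcardI
      exact hcardI
    -- at most two roots become congruent modulo `P`
    have hle : (T.rootSet S).ncard ≤ (T.rootSet (S ⧸ P)).ncard + 1 := by
      rw [hncard]
      refine Nat.succ_le_succ (hnc.trans ?_)
      let j : F →+* S ⧸ P := ((Ideal.Quotient.mk P).comp (algebraMap F[X] S)).comp C
      have hjX : algebraMap F[X] (S ⧸ P) X = j c := by
        change Ideal.Quotient.mk P (algebraMap F[X] S X) =
          Ideal.Quotient.mk P (algebraMap F[X] S (C c))
        rw [Ideal.Quotient.eq, ← map_sub]
        exact hmemP
      refine Set.ncard_le_ncard_of_injOn j ?_ j.injective.injOn (rootSet_finite _ _)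
      intro a ha
      rw [(monic_trinomial m c).mem_rootSet] at ha
      rw [hTm.mem_rootSet]
      simp only [hT, map_sub, map_pow, aeval_X, aeval_C] at ha ⊢
      rw [hjX, ← map_pow, ← map_pow, ← map_sub, ← map_sub]
      simpa using congrArg j ha
    refine ⟨g, (hsplit.toPermHom_apply_eq_one_or_isSwap_of_ncard_le_of_mem_inertia P hle g
      hgI).resolve_left fun hone => hg1 (hN g fun w hw => ?_)⟩
    obtain ⟨i, rfl⟩ := hrooty w hw
    have := congrArg (fun p => algebraMap S N ((p (e i) : T.rootSet S) : S)) hone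
    simp only [MulAction.toPermHom_apply, MulAction.toPerm_apply, rootSet.coe_smul, hcoe,
      Equiv.Perm.one_apply] at this
    change g (algebraMap S N (s i)) = algebraMap S N (s i) at this
    rwa [hs] at this
  obtain ⟨g₀, hg₀⟩ := hswap
  have htop : (MulAction.toPermHom Gal(N/K) (T.rootSet S)).range = ⊤ := by
    refine Equiv.Perm.subgroup_eq_top_of_isPreprimitive_of_isSwap_mem ?_ _ hg₀ ⟨g₀, rfl⟩
    let f : (T.rootSet S) →ₑ[(MulAction.toPermHom Gal(N/K) (T.rootSet S)).rangeRestrict]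
        (T.rootSet S) := ⟨id, fun g x => rfl⟩
    exact MulAction.IsPreprimitive.of_surjective (f := f) Function.surjective_id
  obtain ⟨g, hg⟩ : (e.symm.trans (π.trans e)) ∈
      (MulAction.toPermHom Gal(N/K) (T.rootSet S)).range := htop ▸ Subgroup.mem_top _
  refine ⟨g, fun i => ?_⟩
  have := congrArg (fun p => algebraMap S N ((p (e i) : T.rootSet S) : S)) hg
  simp only [MulAction.toPermHom_apply, MulAction.toPerm_apply, Equiv.trans_apply,
    Equiv.symm_apply_apply, rootSet.coe_smul, hcoe] at this
  change g (algebraMap S N (s i)) = algebraMap S N (s (π i)) at this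
  rwa [hs, hs] at this

end Galois

/-! ### The splitting field of the generic trinomial -/

section Splitting

theorem exists_prod_X_sub_C {R : Type*} [Field R] {p : R[X]} (hp : p.Monic) (hs : p.Splits)
    {ι : Type*} [Fintype ι] (hι : Fintype.card ι = p.natDegree) :
    ∃ z : ι → R, p = ∏ i, (X - C (z i)) := by
  have hl : p.roots.toList.length = Fintype.card ι := by
    rw [Multiset.length_toList, hι, hs.natDegree_eq_card_roots]
  let e : ι ≃ Fin p.roots.toList.length := Fintype.equivFinOfCardEq hl.symm
  refine ⟨fun i => p.roots.toList.get (e i), ?_⟩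
  rw [e.prod_comp (fun j => X - C (p.roots.toList.get j))]
  conv_lhs => rw [hs.eq_prod_roots_of_monic hp]
  conv_lhs => rw [← p.roots.coe_toList]
  rw [Multiset.map_coe, Multiset.prod_coe, ← List.prod_ofFn, ← List.ofFn_get p.roots.toList]
  simp [List.map_ofFn]
  rfl

/-- In the splitting field of the generic trinomial over `F(t)`, the Galois group realizes every
permutation of the roots. -/
theorem trinomial_perm_surjective (F : Type*) [Field F] [IsAlgClosed F] (m : ℕ)
    (h1 : ((m + 1 : ℕ) : F) ≠ 0) (h2 : ((m + 2 : ℕ) : F) ≠ 0)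
    {ι : Type*} [Fintype ι] (hι : Fintype.card ι = m + 2)
    (T : F[X][X]) (hT : T = X ^ (m + 2) - X ^ (m + 1) - C X) :
    ∃ y : ι → (T.map (algebraMap F[X] (FractionRing F[X]))).SplittingField,
      Function.Injective y ∧ T.map (algebraMap F[X] _) = ∏ i, (X - C (y i)) ∧
      ∀ π : Equiv.Perm ι, ∃ g : _ ≃ₐ[FractionRing F[X]] _, ∀ i, g (y i) = y (π i) := by
  have hsep := trinomial_map_separable (F := F) (K := FractionRing F[X]) m h2
  have hTm := monic_trinomial m (X : F[X])
  have hTd : (X ^ (m + 2) - X ^ (m + 1) - C X : F[X][X]).natDegree = m + 2 := by compute_degree!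
  have hroot := fun (N : Type _) [Field N] [Algebra F[X] N] (y : N) =>
    aeval_trinomial_iff (F := F) m y
  simp only [← hT] at hsep hTm hTd hroot
  set T' := T.map (algebraMap F[X] (FractionRing F[X])) with hT'
  have hgal : IsGalois (FractionRing F[X]) T'.SplittingField :=
    IsGalois.of_separable_splitting_field hsep
  have hTN : T.map (algebraMap F[X] T'.SplittingField) =
      T'.map (algebraMap (FractionRing F[X]) T'.SplittingField) := by
    rw [hT', Polynomial.map_map, ← IsScalarTower.algebraMap_eq]
  obtain ⟨y, hy⟩ := exists_prod_X_sub_C (ι := ι) (hTm.map (algebraMap F[X] T'.SplittingField))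
    (by rw [hTN]; exact SplittingField.splits T') (by rw [hTm.natDegree_map, hTd, hι])
  have hyinj : Function.Injective y := by
    rw [← separable_prod_X_sub_C_iff, ← hy, hTN]
    exact hsep.map
  refine ⟨y, hyinj, hy, fun π => ?_⟩
  have hN : ∀ g : Gal(T'.SplittingField/FractionRing F[X]),
      (∀ y : T'.SplittingField, y ^ (m + 2) - y ^ (m + 1) = algebraMap F[X] _ X → g y = y) →
        g = 1 := by
    intro g hg
    apply AlgEquiv.coe_toAlgHom_injective
    apply AlgHom.ext_of_adjoin_eq_top (SplittingField.adjoin_rootSet T')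
    intro w hw
    apply hg w
    rw [← hroot, aeval_def, ← eval_map, hTN, eval_map, ← aeval_def]
    exact (mem_rootSet.1 hw).2
  refine trinomial_perm_surjective_aux (K := FractionRing F[X]) m h1 h2
    (integralClosure F[X] T'.SplittingField) hN y hyinj ?_ π
  rw [← hy, hT]

end Splitting

/-! ### The Galois resolvent twisted by the conjugates of an element -/

section Resolvent

universe v

variable {k L : Type*} [Field k] [Field L] [Algebra k L] {ι : Type*} [Fintype ι] [DecidableEq ι]

/-- The polynomial `∏ π, (s - ∑ i, δ i * Y (π i))` over all permutations `π` of the index set. The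
variable `s` is the polynomial variable of the coefficient ring `L[X]`, and the `Y i` are the
variables of the `MvPolynomial`. -/
noncomputable def galoisResolvent (δ : ι → L) : MvPolynomial ι L[X] :=
  ∏ π : Equiv.Perm ι,
    (MvPolynomial.C X - ∑ i, MvPolynomial.C (C (δ i)) * MvPolynomial.X (π i))

theorem galoisResolvent_isSymmetric (δ : ι → L) : (galoisResolvent δ).IsSymmetric := by
  intro σ
  rw [galoisResolvent, map_prod]
  refine Fintype.prod_equiv (Equiv.mulLeft σ) _ _ fun π => ?_
  simp

/-- An automorphism of `L` which permutes the `δ i` only permutes the factors of the resolvent. -/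
theorem galoisResolvent_map (δ : ι → L) (τ : L →+* L) (ρ : Equiv.Perm ι)
    (hρ : ∀ i, τ (δ i) = δ (ρ i)) :
    MvPolynomial.map (mapRingHom τ) (galoisResolvent δ) = galoisResolvent δ := by
  rw [galoisResolvent, map_prod]
  refine Fintype.prod_equiv (Equiv.mulRight ρ⁻¹) _ _ fun π => ?_
  simp only [map_sub, map_sum, map_mul, MvPolynomial.map_C, MvPolynomial.map_X,
    coe_mapRingHom, map_X, map_C, hρ]
  congr 1
  refine Fintype.sum_equiv ρ _ _ fun i => ?_
  simp

theorem eval₂_galoisResolvent (δ : ι → L) {B : Type*} [CommRing B] (ψ : L →+* B) (s : B)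
    (y : ι → B) :
    MvPolynomial.eval₂ (eval₂RingHom ψ s) y (galoisResolvent δ) =
      ∏ π : Equiv.Perm ι, (s - ∑ i, ψ (δ i) * y (π i)) := by
  rw [galoisResolvent, ← MvPolynomial.coe_eval₂Hom, map_prod]
  simp

/-- If the Galois group permutes the `δ i`, the resolvent is a polynomial in `s` and the elementary
symmetric functions of the `Y i`, with coefficients in the ground field. -/
theorem exists_resolvent_lift [IsGalois k L] (δ : ι → L)
    (hδ : ∀ τ : L ≃ₐ[k] L, ∃ ρ : Equiv.Perm ι, ∀ i, τ (δ i) = δ (ρ i)) :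
    ∃ Q : MvPolynomial (Fin (Fintype.card ι)) k[X],
      MvPolynomial.aeval (fun j : Fin (Fintype.card ι) => MvPolynomial.esymm ι L[X] (j + 1))
        (MvPolynomial.map (mapRingHom (algebraMap k L)) Q) = galoisResolvent δ := by
  have hinj : Function.Injective (MvPolynomial.aeval (R := L[X])
      (fun j : Fin (Fintype.card ι) => MvPolynomial.esymm ι L[X] (j + 1))) := by
    intro p q hpq
    apply MvPolynomial.esymmAlgHom_injective (σ := ι) L[X] le_rfl
    apply Subtype.ext
    rw [MvPolynomial.esymmAlgHom_apply, MvPolynomial.esymmAlgHom_apply, hpq]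
  obtain ⟨Q, hQ⟩ := MvPolynomial.esymmAlgHom_surjective (σ := ι) L[X]
    (n := Fintype.card ι) le_rfl ⟨galoisResolvent δ, galoisResolvent_isSymmetric δ⟩
  replace hQ := congrArg Subtype.val hQ
  rw [MvPolynomial.esymmAlgHom_apply] at hQ
  have hfix : ∀ τ : L ≃ₐ[k] L,
      MvPolynomial.map (mapRingHom (τ : L →+* L)) Q = Q := by
    intro τ
    obtain ⟨ρ, hρ⟩ := hδ τ
    apply hinj
    have h := galoisResolvent_map δ (τ : L →+* L) ρ hρ
    have hcomm : (MvPolynomial.aeval (R := L[X]) (fun j : Fin (Fintype.card ι) =>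
          MvPolynomial.esymm ι L[X] (j + 1))).toRingHom.comp
          (MvPolynomial.map (mapRingHom (τ : L →+* L))) =
        (MvPolynomial.map (mapRingHom (τ : L →+* L))).comp
          (MvPolynomial.aeval (R := L[X]) (fun j : Fin (Fintype.card ι) =>
          MvPolynomial.esymm ι L[X] (j + 1))).toRingHom := by
      apply MvPolynomial.ringHom_ext
      · intro r; simp [MvPolynomial.algebraMap_eq]
      · intro i; simp [MvPolynomial.map_esymm]
    refine (congrArg (fun φ => φ Q) hcomm).trans ?_
    change MvPolynomial.map (mapRingHom (τ : L →+* L)) (MvPolynomial.aeval _ Q) = _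
    rw [hQ, h]
  have hrange : Q ∈ (MvPolynomial.map (σ := Fin (Fintype.card ι))
      (mapRingHom (algebraMap k L))).range := by
    rw [RingHom.mem_range, ← Set.mem_range, MvPolynomial.mem_range_map_iff_coeffs_subset]
    intro x hx
    obtain ⟨d, -, rfl⟩ := MvPolynomial.mem_coeffs_iff.1 hx
    rw [← RingHom.coe_range, SetLike.mem_coe, mem_map_range]
    intro j
    rw [RingHom.mem_range, ← Set.mem_range, InfiniteGalois.mem_range_algebraMap_iff_fixed]
    intro τ
    simpa [MvPolynomial.coeff_map] using congrArg (fun q => (q.coeff d).coeff j) (hfix τ)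
  obtain ⟨Q₀, rfl⟩ := hrange
  exact ⟨Q₀, hQ⟩

/-- Specializing the `Y i` to the roots of `Y ^ (m + 2) - Y ^ (m + 1) - b` turns the resolvent into a
polynomial `f` in `s` (variable `0`) and `b` (variable `1`) over `k`. The identity holds in every
commutative ring over `L` in which the trinomial is given as a product of linear factors. -/
theorem exists_resolvent_polynomial [IsGalois k L] (δ : ι → L)
    (hδ : ∀ τ : L ≃ₐ[k] L, ∃ ρ : Equiv.Perm ι, ∀ i, τ (δ i) = δ (ρ i)) (m : ℕ)
    (hι : Fintype.card ι = m + 2) :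
    ∃ f : MvPolynomial (Fin 2) k, ∀ (B : Type v) [CommRing B] (ψ : L →+* B) (s b : B) (y : ι → B),
      X ^ (m + 2) - X ^ (m + 1) - C b = ∏ i, (X - C (y i)) →
      MvPolynomial.eval₂ (ψ.comp (algebraMap k L)) ![s, b] f =
        ∏ π : Equiv.Perm ι, (s - ∑ i, ψ (δ i) * y (π i)) := by
  obtain ⟨Q, hQ⟩ := exists_resolvent_lift δ hδ
  let t : (MvPolynomial (Fin 2) k)[X] := X ^ (m + 2) - X ^ (m + 1) - C (MvPolynomial.X 1)
  refine ⟨MvPolynomial.eval₂ (eval₂RingHom MvPolynomial.C (MvPolynomial.X 0))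
    (fun j : Fin (Fintype.card ι) => (-1) ^ ((j : ℕ) + 1) * t.coeff (Fintype.card ι - (j + 1))) Q, ?_⟩
  intro B _ ψ s b y hy
  have ht : t.map (MvPolynomial.eval₂Hom (ψ.comp (algebraMap k L)) ![s, b]) =
      ∏ i, (X - C (y i)) := by
    rw [← hy]; simp [t]
  have hcoeff : ∀ j : Fin (Fintype.card ι),
      (-1) ^ ((j : ℕ) + 1) * MvPolynomial.eval₂Hom (ψ.comp (algebraMap k L)) ![s, b]
        (t.coeff (Fintype.card ι - (j + 1))) = (Finset.univ.val.map y).esymm (j + 1) := by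
    intro j
    rw [← coeff_map, ht]
    have hc : (Finset.univ.val.map y).card = Fintype.card ι := by simp
    have := Multiset.prod_X_sub_C_coeff (Finset.univ.val.map y)
      (k := Fintype.card ι - (j + 1)) (by rw [hc]; omega)
    rw [hc, Multiset.map_map] at this
    change (∏ i, (X - C (y i))).coeff _ = _ at this
    rw [this, show Fintype.card ι - (Fintype.card ι - ((j : ℕ) + 1)) = j + 1 by omega, ← mul_assoc,
      ← mul_pow]
    simp
  rw [← eval₂_galoisResolvent δ ψ s y, ← hQ]
  let φ : MvPolynomial (Fin (Fintype.card ι)) k[X] →+* B :=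
    (MvPolynomial.eval₂Hom (ψ.comp (algebraMap k L)) ![s, b]).comp
      (MvPolynomial.eval₂Hom (eval₂RingHom MvPolynomial.C (MvPolynomial.X 0))
        (fun j : Fin (Fintype.card ι) => (-1) ^ ((j : ℕ) + 1) * t.coeff (Fintype.card ι - (j + 1))))
  let φ' : MvPolynomial (Fin (Fintype.card ι)) k[X] →+* B :=
    ((MvPolynomial.eval₂Hom (eval₂RingHom ψ s) y).comp
      (MvPolynomial.aeval (R := L[X]) (fun j : Fin (Fintype.card ι) =>
          MvPolynomial.esymm ι L[X] (j + 1))).toRingHom).comp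
      (MvPolynomial.map (mapRingHom (algebraMap k L)))
  have hφ : φ = φ' := by
    apply MvPolynomial.ringHom_ext
    · intro r
      induction r using Polynomial.induction_on' with
      | add p q hp hq => simp only [map_add, hp, hq]
      | monomial d a =>
        simp [φ, φ', MvPolynomial.algebraMap_eq, ← C_mul_X_pow_eq_monomial]
    · intro j
      have he : MvPolynomial.eval₂Hom (eval₂RingHom ψ s) y (MvPolynomial.esymm ι L[X] (j + 1)) =
          (Finset.univ.val.map y).esymm (j + 1) := by
        algebraize [eval₂RingHom ψ s]
        exact MvPolynomial.aeval_esymm_eq_multiset_esymm ι L[X] (j + 1) y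
      rw [← hcoeff] at he
      simp only [φ, φ', RingHom.comp_apply, MvPolynomial.map_X]
      simp only [MvPolynomial.eval₂Hom_X', AlgHom.toRingHom_eq_coe, RingHom.coe_coe,
        MvPolynomial.aeval_X, map_mul, map_pow, map_neg, map_one, he]
  exact congrArg (fun q => q Q) hφ

end Resolvent

/-! ### Absolute irreducibility of the resolvent -/

section Generic

/-- For a suitable `d`, the sums `∑ σ, σ(d) * y (π σ)` are distinct for distinct permutations `π`. By
Dedekind's independence of characters, each coincidence confines `d` to a proper subspace, and a
vector space over an infinite field is not a finite union of proper subspaces. -/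
theorem exists_separating_element {k E L N : Type*} [Field k] [Infinite k] [Field E] [Field L]
    [Field N] [Algebra k E] [Algebra k L] [Fintype (E →ₐ[k] L)] (ψ : L →+* N)
    (y : (E →ₐ[k] L) → N) (hy : Function.Injective y) :
    ∃ d : E, Function.Injective
      (fun π : Equiv.Perm (E →ₐ[k] L) => ∑ σ, ψ (σ d) * y (π σ)) := by
  classical
  let : Algebra k N := (ψ.comp (algebraMap k L)).toAlgebra
  let f : Equiv.Perm (E →ₐ[k] L) → E →ₗ[k] N := fun π =>
    { toFun := fun d => ∑ σ, ψ (σ d) * y (π σ)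
      map_add' := fun a b => by simp [add_mul, Finset.sum_add_distrib]
      map_smul' := fun c a => by
        simp only [Algebra.smul_def, map_mul, AlgHom.commutes, RingHom.id_apply, Finset.mul_sum, mul_assoc]
        rfl }
  let I := {p : Equiv.Perm (E →ₐ[k] L) × Equiv.Perm (E →ₐ[k] L) // p.1 ≠ p.2}
  by_contra! hcon
  have hcov : ⋃ p : I, ((LinearMap.ker (f p.1.1 - f p.1.2) : Subspace k E) : Set E) =
      Set.univ := by
    refine Set.eq_univ_of_forall fun d => ?_
    have := hcon d
    rw [Function.not_injective_iff] at this
    obtain ⟨π, π', h, hne⟩ := this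
    exact Set.mem_iUnion.2 ⟨⟨(π, π'), hne⟩, LinearMap.mem_ker.2 (sub_eq_zero.2 h)⟩
  obtain ⟨⟨⟨π, π'⟩, hne⟩, htop⟩ := Subspace.exists_eq_top_of_iUnion_eq_univ hcov
  apply hne
  have hli : LinearIndependent N (fun σ : E →ₐ[k] L => (fun d => ψ (σ d) : E → N)) := by
    refine (linearIndependent_monoidHom E N).comp
      (fun σ : E →ₐ[k] L => ((ψ.comp (σ : E →+* L) : E →+* N) : E →* N)) ?_
    intro σ σ' h
    ext d
    exact ψ.injective (DFunLike.congr_fun h d)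
  rw [Fintype.linearIndependent_iff] at hli
  have h0 := hli (fun σ => y (π σ) - y (π' σ)) (by
    ext d
    have hd : d ∈ LinearMap.ker (f π - f π') := by
      change LinearMap.ker (f π - f π') = ⊤ at htop
      rw [htop]; trivial
    rw [LinearMap.mem_ker, LinearMap.sub_apply] at hd
    simp only [Finset.sum_apply, Pi.smul_apply, smul_eq_mul, Pi.zero_apply]
    rw [← hd]
    simp only [f, LinearMap.coe_mk, AddHom.coe_mk, ← Finset.sum_sub_distrib]
    exact Finset.sum_congr rfl fun σ _ => by ring)
  exact Equiv.ext fun σ => hy (sub_eq_zero.1 (h0 σ))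

/-- A polynomial over `F[X]` with distinct roots in `N`, all conjugate over `K = F(X)`, is irreducible,
and remains separable under all specializations of `X` outside the zeros of some `r ≠ 0`. -/
theorem irreducible_of_conjugate_roots {F K N : Type*} [Field F] [Field K] [Field N]
    [Algebra F[X] K] [IsFractionRing F[X] K] [Algebra K N] [Algebra F[X] N]
    [IsScalarTower F[X] K N] {κ : Type*} [Fintype κ] (q : F[X][X]) (s : κ → N)
    (hs : Function.Injective s) (hq : q.map (algebraMap F[X] N) = ∏ i, (X - C (s i)))
    (i₀ : κ) (hconj : ∀ i, ∃ g : N ≃ₐ[K] N, g (s i₀) = s i) :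
    q.Monic ∧ Irreducible q ∧
      ∃ r : F[X], r ≠ 0 ∧ ∀ b, r.eval b ≠ 0 → (q.map (evalRingHom b)).Separable := by
  have hinjK : Function.Injective (algebraMap F[X] K) := IsFractionRing.injective F[X] K
  have hinj : Function.Injective (algebraMap F[X] N) := by
    rw [IsScalarTower.algebraMap_eq F[X] K N]
    exact (algebraMap K N).injective.comp hinjK
  have hqm : q.Monic := by
    apply monic_of_injective hinj
    rw [hq]
    exact monic_prod_of_monic _ _ fun i _ => monic_X_sub_C _
  have hqKN : (q.map (algebraMap F[X] K)).map (algebraMap K N) = ∏ i, (X - C (s i)) := by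
    rw [Polynomial.map_map, ← IsScalarTower.algebraMap_eq, hq]
  have hqKm := hqm.map (algebraMap F[X] K)
  have hroot : aeval (s i₀) (q.map (algebraMap F[X] K)) = 0 := by
    rw [aeval_def, ← eval_map, hqKN, eval_prod]
    exact Finset.prod_eq_zero (Finset.mem_univ i₀) (by simp)
  have hInt : IsIntegral K (s i₀) := ⟨_, hqKm, by rwa [← aeval_def]⟩
  have hdvd : (∏ i, (X - C (s i))) ∣ (minpoly K (s i₀)).map (algebraMap K N) := by
    apply Finset.prod_dvd_of_coprime
    · exact fun i _ j _ hij => pairwise_coprime_X_sub_C hs hij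
    · intro i _
      obtain ⟨g, hg⟩ := hconj i
      rw [dvd_iff_isRoot, IsRoot.def, eval_map, ← aeval_def, ← hg]
      exact (aeval_algHom_apply g.toAlgHom (s i₀) (minpoly K (s i₀))).trans (by simp)
  have hmin : minpoly K (s i₀) = q.map (algebraMap F[X] K) := by
    refine (eq_of_monic_of_dvd_of_natDegree_le (minpoly.monic hInt) hqKm
      (minpoly.dvd _ _ hroot) ?_).symm
    rw [← hqKN] at hdvd
    have := natDegree_le_of_dvd hdvd ((minpoly.monic hInt).map _).ne_zero
    rwa [(minpoly.monic hInt).natDegree_map, hqKm.natDegree_map] at this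
  refine ⟨hqm, ?_, ?_⟩
  · rw [hqm.irreducible_iff_irreducible_map_fraction_map (K := K), ← hmin]
    exact minpoly.irreducible hInt
  · have hsep : (q.map (algebraMap F[X] K)).Separable := by
      rw [← separable_map (algebraMap K N), hqKN, separable_prod_X_sub_C_iff]
      exact hs
    -- clearing denominators in a Bézout relation gives `r`
    obtain ⟨u, v, huv⟩ := hsep
    obtain ⟨a, ha, hu⟩ := IsLocalization.integerNormalization_spec
      (nonZeroDivisors F[X]) u
    obtain ⟨c, hc, hv⟩ := IsLocalization.integerNormalization_spec
      (nonZeroDivisors F[X]) v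
    set U := IsLocalization.integerNormalization (nonZeroDivisors F[X]) u
    set V := IsLocalization.integerNormalization (nonZeroDivisors F[X]) v
    have key : C c * U * q + C a * V * derivative q = C (a * c) := by
      apply Polynomial.map_injective _ hinjK
      simp only [Polynomial.map_add, Polynomial.map_mul, map_C, hu, hv, Algebra.smul_def,
        ← derivative_map, Polynomial.algebraMap_apply, map_mul]
      linear_combination (C (algebraMap F[X] K a) * C (algebraMap F[X] K c)) * huv
    refine ⟨a * c, mul_ne_zero (nonZeroDivisors.ne_zero ha) (nonZeroDivisors.ne_zero hc), ?_⟩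
    intro b hb
    have h := congrArg (Polynomial.map (evalRingHom b)) key
    simp only [Polynomial.map_add, Polynomial.map_mul (p := _ * _), map_C, coe_evalRingHom,
      ← derivative_map] at h
    rw [Polynomial.Separable]
    refine ⟨C ((a * c).eval b)⁻¹ * (C c * U).map (evalRingHom b),
      C ((a * c).eval b)⁻¹ * (C a * V).map (evalRingHom b), ?_⟩
    rw [mul_assoc, mul_assoc, ← mul_add, h, ← C_mul, inv_mul_cancel₀ hb, C_1]

end Generic

/-! ### From a zero of the resolvent to a generator of the extension -/

section Descent

variable {k E L : Type*} [Field k] [Field E] [Field L] [Algebra k E] [Algebra k L]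

theorem exists_comp_eq_of_normal [Normal k L] (σ₀ σ : E →ₐ[k] L) :
    ∃ τ : L ≃ₐ[k] L, ∀ x, τ (σ₀ x) = σ x := by
  let : Algebra E L := σ₀.toRingHom.toAlgebra
  have : IsScalarTower k E L := IsScalarTower.of_algebraMap_eq fun x => (σ₀.commutes x).symm
  exact ⟨AlgEquiv.ofBijective (σ.liftNormal L) (AlgHom.normal_bijective k L L _),
    fun x => σ.liftNormal_commutes L x⟩

/-- Suppose `s₀ = ∑ σ, σ(d) * w σ` is rational over `k`, where `w` enumerates the roots of `p` by the
embeddings of `E`. If the resolvent separates permutations, then comparing `s₀` with its conjugates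
shows that the Galois group permutes the `w σ` exactly as it permutes the embeddings `σ`. Hence the
`w σ` are the conjugates `σ x` of a single element `x` generating `E`. -/
theorem exists_generator_of_resolvent_zero [IsGalois k L] [FiniteDimensional k E]
    [Algebra.IsSeparable k E] [Fintype (E →ₐ[k] L)]
    (hA : ∀ x : E, ((minpoly k x).map (algebraMap k L)).Splits)
    (d : E) (p : k[X]) (w : (E →ₐ[k] L) → L) (hw : Function.Injective w)
    (hp : p.map (algebraMap k L) = ∏ σ, (X - C (w σ))) (s₀ : k)
    (hs₀ : algebraMap k L s₀ = ∑ σ, σ d * w σ)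
    (hinj : Function.Injective (fun π : Equiv.Perm (E →ₐ[k] L) => ∑ σ, σ d * w (π σ))) :
    ∃ x : E, aeval x p = 0 ∧ IntermediateField.adjoin k {x} = ⊤ := by
  classical
  have hroot : ∀ l : L, aeval l p = 0 ↔ ∃ σ, w σ = l := by
    intro l
    rw [aeval_def, ← eval_map, hp, eval_prod, Finset.prod_eq_zero_iff]
    simp [sub_eq_zero, eq_comm]
  have key : ∀ (τ : L ≃ₐ[k] L) (σ : E →ₐ[k] L), τ (w σ) = w (τ.toAlgHom.comp σ) := by
    intro τ
    have h1 : ∀ σ, ∃ σ', w σ' = τ (w σ) := by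
      intro σ
      rw [← hroot]
      refine (aeval_algHom_apply τ.toAlgHom (w σ) p).trans ?_
      rw [(hroot _).2 ⟨σ, rfl⟩, map_zero]
    choose ρ hρ using h1
    have hρinj : Function.Injective ρ := by
      intro σ σ' h
      apply hw
      apply τ.injective
      rw [← hρ, ← hρ, h]
    let ρ' : Equiv.Perm (E →ₐ[k] L) := Equiv.ofBijective ρ (Finite.injective_iff_bijective.1 hρinj)
    have hlinj : Function.Injective (fun σ : E →ₐ[k] L => τ.toAlgHom.comp σ) := by
      intro σ σ' h
      ext x
      exact τ.injective (DFunLike.congr_fun h x)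
    let l : Equiv.Perm (E →ₐ[k] L) := Equiv.ofBijective _ (Finite.injective_iff_bijective.1 hlinj)
    -- applying `τ` to the element `s₀` of `k` reindexes the sum by `ρ' * l⁻¹`
    have hone : ρ' * l⁻¹ = 1 := by
      apply hinj
      simp only [Equiv.Perm.one_apply]
      rw [← hs₀, ← τ.commutes s₀, hs₀, map_sum]
      refine (Fintype.sum_equiv l _ _ fun σ => ?_).symm
      rw [map_mul, Equiv.Perm.mul_apply, Equiv.Perm.inv_def, Equiv.symm_apply_apply, ← hρ]
      rfl
    intro σ
    rw [← hρ]
    exact congrArg (fun π => w (π σ)) (mul_inv_eq_one.1 hone)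
  have hne : Nonempty (E →ₐ[k] L) := by
    have h : Nat.card (E →ₐ[k] L) = Module.finrank k E :=
      (@Nat.card_eq_fintype_card _ (minpoly.AlgHom.fintype k E L)).trans
        (AlgHom.card_of_splits k E L hA)
    exact (Nat.card_pos_iff.1 (h ▸ Module.finrank_pos)).1
  obtain ⟨σ₀⟩ := hne
  obtain ⟨x, hx⟩ : w σ₀ ∈ σ₀.fieldRange := by
    rw [← InfiniteGalois.fixedField_fixingSubgroup σ₀.fieldRange, IntermediateField.mem_fixedField_iff]
    intro τ hτ
    rw [key]
    congr 1
    ext x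
    exact (IntermediateField.mem_fixingSubgroup_iff _ _).1 hτ _ ⟨x, rfl⟩
  have hall : ∀ σ, σ x = w σ := by
    intro σ
    obtain ⟨τ, hτ⟩ := exists_comp_eq_of_normal σ₀ σ
    have : τ.toAlgHom.comp σ₀ = σ := AlgHom.ext hτ
    rw [← this, ← key, ← hx]
    rfl
  refine ⟨x, ?_, ?_⟩
  · apply (σ₀ : E →+* L).injective
    change σ₀ (aeval x p) = σ₀ 0
    rw [map_zero, ← aeval_algHom_apply, hroot]
    exact ⟨σ₀, (hall σ₀).symm⟩
  · rw [Field.primitive_element_iff_algHom_eq_of_eval' k L hA]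
    intro σ σ' h
    apply hw
    rw [← hall, ← hall]
    exact h

end Descent

/-! ### Reduction to rational points -/

section Assembly

universe u w

/-- Irreducibility transfers from `F[b][s]` to polynomials in the two variables `s` and `b`. -/
theorem irreducible_of_eval₂ {F : Type*} [Field F] (f : MvPolynomial (Fin 2) F)
    (hf : Irreducible (MvPolynomial.eval₂ (C.comp C) ![(X : F[X][X]), C X] f)) :
    Irreducible f := by
  let φ : MvPolynomial (Fin 2) F →+* F[X][X] := MvPolynomial.eval₂Hom (C.comp C) ![X, C X]
  let χ : F[X][X] →+* MvPolynomial (Fin 2) F :=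
    eval₂RingHom (eval₂RingHom MvPolynomial.C (MvPolynomial.X 1)) (MvPolynomial.X 0)
  let e : MvPolynomial (Fin 2) F ≃+* F[X][X] := RingEquiv.ofRingHom φ χ
    (by
      ext
      · simp [φ, χ]
      · simp [φ, χ]
      · simp [φ, χ])
    (by
      ext i : 2
      · simp [φ, χ]
      · fin_cases i <;> simp [φ, χ])
  exact (MulEquiv.irreducible_iff e).1 hf

theorem infinite_of_isPAC {k : Type*} [Field k] (h : IsPAC k) : Infinite k := by
  have h0 := h (MvPolynomial.X 0) (by
    rw [MvPolynomial.map_X]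
    exact MvPolynomial.X_prime.irreducible)
  by_contra hfin
  rw [not_infinite_iff_finite] at hfin
  exact h0 (Set.toFinite _)

theorem isSeparable_of_natCast_finrank_ne_zero {k E : Type*} [Field k] [Field E] [Algebra k E]
    [FiniteDimensional k E] (h : ((Module.finrank k E : ℕ) : k) ≠ 0) :
    Algebra.IsSeparable k E := by
  rw [isSeparable_iff_finInsepDegree_eq_one]
  obtain ⟨p, hp⟩ := ExpChar.exists k
  obtain ⟨r, hr⟩ := finInsepDegree_eq_pow k E p
  rw [← Field.finSepDegree_mul_finInsepDegree, hr] at h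
  rcases hp with _ | _
  · rw [hr, one_pow]
  · rcases Nat.eq_zero_or_pos r with rfl | hpos
    · simpa using hr
    · exact absurd (by simp [hpos.ne']) h

/-- The resolvent `f` of a suitable `d` is absolutely irreducible: over `F(t)` its roots are distinct
and permuted transitively by the Galois group of the generic trinomial, which is the full symmetric
group. Here `q` is `f` read in `F[b][s]`. -/
theorem exists_irreducible_resolvent {k L F : Type u} {E : Type w} [Field k] [Infinite k]
    [Field L] [Field F] [Field E] [Algebra k L] [Algebra k E] [Algebra k F] [Algebra L F]
    [IsScalarTower k L F] [IsGalois k L] [IsAlgClosed F] [Fintype (E →ₐ[k] L)]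
    [DecidableEq (E →ₐ[k] L)] (m : ℕ)
    (h1 : ((m + 1 : ℕ) : F) ≠ 0) (h2 : ((m + 2 : ℕ) : F) ≠ 0)
    (hcard : Fintype.card (E →ₐ[k] L) = m + 2) :
    ∃ (d : E) (f : MvPolynomial (Fin 2) k) (q : F[X][X]),
      (∀ (B : Type u) [CommRing B] (ψ : L →+* B) (s b : B) (y : (E →ₐ[k] L) → B),
        X ^ (m + 2) - X ^ (m + 1) - C b = ∏ σ, (X - C (y σ)) →
        MvPolynomial.eval₂ (ψ.comp (algebraMap k L)) ![s, b] f =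
          ∏ π : Equiv.Perm (E →ₐ[k] L), (s - ∑ σ, ψ (σ d) * y (π σ))) ∧
      q = MvPolynomial.eval₂ (C.comp (C.comp (algebraMap k F))) ![X, C X] f ∧
      q.Monic ∧ Irreducible q ∧
      ∃ r : F[X], r ≠ 0 ∧ ∀ b, r.eval b ≠ 0 → (q.map (evalRingHom b)).Separable := by
  obtain ⟨T, hT⟩ : ∃ T : F[X][X], T = X ^ (m + 2) - X ^ (m + 1) - C X := ⟨_, rfl⟩
  obtain ⟨y, hyi, hyr, hsurj⟩ := trinomial_perm_surjective F m h1 h2 hcard T hT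
  let N := (T.map (algebraMap F[X] (FractionRing F[X]))).SplittingField
  let θ : F[X] →+* N := algebraMap F[X] N
  have hθ : θ = (algebraMap (FractionRing F[X]) N).comp (algebraMap F[X] (FractionRing F[X])) :=
    IsScalarTower.algebraMap_eq _ _ _
  let ψ : L →+* N := θ.comp (C.comp (algebraMap L F))
  obtain ⟨d, hd⟩ := exists_separating_element ψ y hyi
  obtain ⟨f, hf⟩ := exists_resolvent_polynomial (k := k) (L := L)
    (fun σ : E →ₐ[k] L => σ d) (by
      intro τ
      have hlinj : Function.Injective (fun σ : E →ₐ[k] L => τ.toAlgHom.comp σ) := by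
        intro σ σ' h
        ext x
        exact τ.injective (DFunLike.congr_fun h x)
      exact ⟨Equiv.ofBijective _ (Finite.injective_iff_bijective.1 hlinj), fun σ => rfl⟩) m hcard
  refine ⟨d, f, _, hf, rfl, ?_⟩
  set q : F[X][X] := MvPolynomial.eval₂ (C.comp (C.comp (algebraMap k F))) ![X, C X] f with hq
  have hroots : X ^ (m + 2) - X ^ (m + 1) - C (θ X) = ∏ σ, (X - C (y σ)) := by
    refine Eq.trans ?_ hyr
    refine Eq.trans ?_ (congrArg (Polynomial.map θ) hT.symm)
    simp
  have hqN : q.map θ = ∏ π : Equiv.Perm (E →ₐ[k] L), (X - C (∑ σ, ψ (σ d) * y (π σ))) := by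
    have h := hf N[X] (C.comp ψ) X (C (θ X)) (fun σ => C (y σ)) (by
      have := congrArg (Polynomial.map (C : N →+* N[X])) hroots
      simpa [Polynomial.map_prod] using this)
    simp only [RingHom.comp_apply, ← map_mul, ← map_sum] at h
    rw [← h, hq]
    change mapRingHom θ _ = _
    rw [MvPolynomial.hom_eval₂]
    congr 1
    · ext x
      simp [ψ, IsScalarTower.algebraMap_apply k L F]
    · ext i
      fin_cases i <;> simp
  refine irreducible_of_conjugate_roots (K := FractionRing F[X]) q
    (fun π : Equiv.Perm (E →ₐ[k] L) => ∑ σ, ψ (σ d) * y (π σ)) hd hqN 1 fun π => ?_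
  obtain ⟨g, hg⟩ := hsurj π
  refine ⟨g, ?_⟩
  have hgψ : ∀ x, g (ψ x) = ψ x := fun x => by
    simp only [ψ, hθ, RingHom.comp_apply]
    exact g.commutes _
  simp [map_sum, hgψ, hg]

/-- Infinitely many points on a curve that is monic in the first coordinate cannot all have their
second coordinate among the finitely many zeros of `r`. -/
theorem exists_zero_of_ne_zero {k F : Type*} [Field k] [Field F] [Algebra k F] {S : Set (k × k)}
    (hS : S.Infinite) {q : F[X][X]} (hq : q.Monic)
    (hroot : ∀ x ∈ S, (q.map (evalRingHom (algebraMap k F x.2))).IsRoot (algebraMap k F x.1))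
    {r : F[X]} (hr : r ≠ 0) : ∃ x ∈ S, r.eval (algebraMap k F x.2) ≠ 0 := by
  have hfin : ∀ p : F[X], p ≠ 0 → {a : k | p.IsRoot (algebraMap k F a)}.Finite := fun p hp =>
    (finite_setOfPred_isRoot hp).preimage (algebraMap k F).injective.injOn
  by_contra! hcon
  refine hS (((hfin r hr).biUnion fun b _ =>
    (hfin _ (hq.map (evalRingHom (algebraMap k F b))).ne_zero).image fun a => (a, b)).subset ?_)
  rintro ⟨a, b⟩ hx
  exact Set.mem_biUnion (hcon _ hx) ⟨a, hroot _ hx, rfl⟩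

/-- A rational zero `(s, b)` of the resolvent `f` at which `f(·, b)` is separable makes
`Y ^ (m + 2) - Y ^ (m + 1) - b` have a root generating `E`. -/
theorem exists_generator_of_good_zero {k L F : Type u} {E : Type w} [Field k]
    [Field L] [Field F] [Field E] [Algebra k L] [Algebra k E] [Algebra k F] [Algebra L F]
    [IsScalarTower k L F] [IsGalois k L] [IsSepClosed L] [IsAlgClosed F] [FiniteDimensional k E]
    [Algebra.IsSeparable k E] [Fintype (E →ₐ[k] L)] [DecidableEq (E →ₐ[k] L)] (m : ℕ)
    (hcard : Fintype.card (E →ₐ[k] L) = m + 2) (d : E) (f : MvPolynomial (Fin 2) k)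
    (hf : ∀ (B : Type u) [CommRing B] (ψ : L →+* B) (s b : B) (y : (E →ₐ[k] L) → B),
        X ^ (m + 2) - X ^ (m + 1) - C b = ∏ σ, (X - C (y σ)) →
        MvPolynomial.eval₂ (ψ.comp (algebraMap k L)) ![s, b] f =
          ∏ π : Equiv.Perm (E →ₐ[k] L), (s - ∑ σ, ψ (σ d) * y (π σ)))
    (s b : k) (hsb : MvPolynomial.eval ![s, b] f = 0)
    (hsep : (MvPolynomial.eval₂ (C.comp (algebraMap k F)) ![X, C (algebraMap k F b)] f).Separable) :
    ∃ x : E, aeval x (X ^ (m + 2) - X ^ (m + 1) - C b : k[X]) = 0 ∧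
      IntermediateField.adjoin k {x} = ⊤ := by
  obtain ⟨p, hp⟩ : ∃ p : k[X], p = X ^ (m + 2) - X ^ (m + 1) - C b := ⟨_, rfl⟩
  have hpm : p.Monic := by
    rw [hp]
    exact monic_trinomial m b
  have hpd : p.natDegree = m + 2 := by rw [hp]; compute_degree!
  rw [← hp]
  have hkLF : (algebraMap L F).comp (algebraMap k L) = algebraMap k F :=
    (IsScalarTower.algebraMap_eq k L F).symm
  have hinj : ∀ z : (E →ₐ[k] L) → F, p.map (algebraMap k F) = ∏ σ, (X - C (z σ)) →
      Function.Injective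
        (fun π : Equiv.Perm (E →ₐ[k] L) => ∑ σ, algebraMap L F (σ d) * z (π σ)) := by
    intro z hz
    have h := hf F[X] (C.comp (algebraMap L F)) X (C (algebraMap k F b)) (fun σ => C (z σ)) (by
      have := congrArg (Polynomial.map (C : F →+* F[X])) hz
      simpa [Polynomial.map_prod, hp] using this)
    simp only [RingHom.comp_apply, ← map_mul, ← map_sum] at h
    rw [RingHom.comp_assoc, hkLF] at h
    rw [h, separable_prod_X_sub_C_iff] at hsep
    exact hsep
  have hpsep : p.Separable := by
    obtain ⟨z, hz⟩ := exists_prod_X_sub_C (ι := E →ₐ[k] L) (hpm.map (algebraMap k F))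
      (IsAlgClosed.splits _) (by rw [hpm.natDegree_map, hpd, hcard])
    rw [← separable_map (algebraMap k F), hz, separable_prod_X_sub_C_iff]
    intro σ σ' hσ
    -- equal roots would make the transposition exchanging them act trivially on the resolvent
    have h1 : Equiv.swap σ σ' = 1 := by
      apply hinj z hz
      refine Finset.sum_congr rfl fun ρ _ => ?_
      congr 1
      simp only [Equiv.Perm.one_apply]
      rcases eq_or_ne ρ σ with rfl | h
      · rw [Equiv.swap_apply_left, hσ]
      · rcases eq_or_ne ρ σ' with rfl | h'
        · rw [Equiv.swap_apply_right, hσ]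
        · rw [Equiv.swap_apply_of_ne_of_ne h h']
    exact Equiv.swap_eq_one_iff.1 h1
  obtain ⟨v, hv⟩ := exists_prod_X_sub_C (ι := E →ₐ[k] L) (hpm.map (algebraMap k L))
    (IsSepClosed.splits_codomain _ hpsep) (by rw [hpm.natDegree_map, hpd, hcard])
  have hvinj : Function.Injective v := by
    rw [← separable_prod_X_sub_C_iff, ← hv]
    exact hpsep.map
  have hvres : Function.Injective
      (fun π : Equiv.Perm (E →ₐ[k] L) => ∑ σ, σ d * v (π σ)) := by
    have h := hinj (fun σ => algebraMap L F (v σ)) (by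
      rw [← hkLF, ← Polynomial.map_map, hv]
      simp [Polynomial.map_prod])
    simp only [← map_mul, ← map_sum] at h
    exact Function.Injective.of_comp (f := algebraMap L F) h
  obtain ⟨π₀, hπ₀⟩ : ∃ π : Equiv.Perm (E →ₐ[k] L),
      algebraMap k L s = ∑ σ, σ d * v (π σ) := by
    have h := hf L (RingHom.id L) (algebraMap k L s) (algebraMap k L b) v (by
      rw [← hv, hp]; simp)
    have h0 : MvPolynomial.eval₂ (algebraMap k L) ![algebraMap k L s, algebraMap k L b] f = 0 := by
      rw [← map_zero (algebraMap k L), ← hsb, MvPolynomial.eval, MvPolynomial.coe_eval₂Hom,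
        MvPolynomial.hom_eval₂]
      congr 1
      ext i
      fin_cases i <;> simp
    rw [RingHom.id_comp, h0] at h
    obtain ⟨π, -, hπ⟩ := Finset.prod_eq_zero_iff.1 h.symm
    exact ⟨π, sub_eq_zero.1 hπ⟩
  refine exists_generator_of_resolvent_zero
    (fun x => IsSepClosed.splits_codomain _ (Algebra.IsSeparable.isSeparable k x)) d p
    (fun σ => v (π₀ σ)) (hvinj.comp π₀.injective) ?_ s hπ₀ ?_
  · rw [hv]
    exact (Equiv.prod_comp π₀ fun σ => X - C (v σ)).symm
  · intro π π' h
    exact mul_left_cancel (hvres (a₁ := π₀ * π) (a₂ := π₀ * π') h)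

end Assembly

theorem stmt_16 (k E : Type*) [Field k] [Field E] [Algebra k E]
    (hPAC : IsPAC k) (n : ℕ) (hn : 2 ≤ n)
    (hchar : IsUnit ((n * (n - 1) : ℕ) : k))
    (hdeg : Module.finrank k E = n) :
    ∃ b : k, Irreducible (X ^ n - X ^ (n - 1) - C b) ∧
      ∃ x : E, Polynomial.aeval x (X ^ n - X ^ (n - 1) - C b) = 0 ∧
        IntermediateField.adjoin k {x} = ⊤ := by
  classical
  obtain ⟨m, rfl⟩ := Nat.exists_eq_add_of_le' hn
  change IsUnit (((m + 2) * (m + 1) : ℕ) : k) at hchar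
  change ∃ b : k, Irreducible (X ^ (m + 2) - X ^ (m + 1) - C b) ∧
    ∃ x : E, aeval x (X ^ (m + 2) - X ^ (m + 1) - C b : k[X]) = 0 ∧
      IntermediateField.adjoin k {x} = ⊤
  rw [Nat.cast_mul, isUnit_iff_ne_zero] at hchar
  have h2 : ((m + 2 : ℕ) : k) ≠ 0 := left_ne_zero_of_mul hchar
  have h1 : ((m + 1 : ℕ) : k) ≠ 0 := right_ne_zero_of_mul hchar
  have : FiniteDimensional k E := Module.finite_of_finrank_pos (by omega)
  have : Algebra.IsSeparable k E := isSeparable_of_natCast_finrank_ne_zero (by rwa [hdeg])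
  have : Infinite k := infinite_of_isPAC hPAC
  let F := AlgebraicClosure k
  let L := SeparableClosure k
  have hF : ∀ a : ℕ, (a : k) ≠ 0 → (a : F) ≠ 0 := fun a ha => by
    rw [← map_natCast (algebraMap k F)]
    exact (_root_.map_ne_zero _).2 ha
  have hcard : Fintype.card (E →ₐ[k] L) = m + 2 := by
    rw [← hdeg]
    exact AlgHom.card_of_splits k E L fun x =>
      IsSepClosed.splits_codomain _ (Algebra.IsSeparable.isSeparable k x)
  obtain ⟨d, f, q, hf, hq, hqm, hqirr, r, hr, hsep⟩ :=
    exists_irreducible_resolvent (k := k) (L := L) (F := F) (E := E) m (hF _ h1) (hF _ h2) hcard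
  have hS := hPAC f (irreducible_of_eval₂ _ (by
    rw [MvPolynomial.eval₂_map]
    rwa [hq] at hqirr))
  have hqb : ∀ b : k, q.map (evalRingHom (algebraMap k F b)) =
      MvPolynomial.eval₂ (C.comp (algebraMap k F)) ![X, C (algebraMap k F b)] f := by
    intro b
    rw [hq]
    change mapRingHom (evalRingHom (algebraMap k F b)) _ = _
    rw [MvPolynomial.hom_eval₂]
    congr 1
    · ext x
      simp
    · ext i
      fin_cases i <;> simp
  obtain ⟨⟨s, b⟩, hsb, hrb⟩ := exists_zero_of_ne_zero hS hqm (fun x hx => by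
    rw [hqb, IsRoot.def, ← coe_evalRingHom, MvPolynomial.hom_eval₂]
    rw [← map_zero (algebraMap k F), ← show MvPolynomial.eval ![x.1, x.2] f = 0 from hx,
      MvPolynomial.eval, MvPolynomial.coe_eval₂Hom, MvPolynomial.hom_eval₂]
    congr 1
    · ext a
      simp
    · ext i
      fin_cases i <;> simp) hr
  obtain ⟨x, hx, hxtop⟩ := exists_generator_of_good_zero (F := F) m hcard d f hf s b hsb (by
    rw [← hqb]
    exact hsep _ hrb)
  refine ⟨b, ?_, x, hx, hxtop⟩
  have hInt : IsIntegral k x := Algebra.IsIntegral.isIntegral x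
  have hdegx : (minpoly k x).natDegree = m + 2 := by
    rw [← IntermediateField.adjoin.finrank hInt, hxtop, IntermediateField.finrank_top', hdeg]
  -- the minimal polynomial of `x` has degree `m + 2` and divides the monic trinomial
  have heq := eq_of_monic_of_dvd_of_natDegree_le (minpoly.monic hInt) (monic_trinomial m b)
    (minpoly.dvd _ _ hx) (by rw [hdegx]; compute_degree!)
  rw [heq]
  exact minpoly.irreducible hInt
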